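/- arXiv:1408.4527 — 8 statements merged into one kernel-verified Lean document; each statement's English description precedes it below -/
import Mathlib

section
/- Let ψ₃(s) = 9/(8s²) + 3 ln s/(2s) − 1/s − 1/4 for s ≥ 1. Then ∫₁^∞ ψ₃(s)² s^{−2} ds = 11/1920. -/
open MeasureTheory Set

/-!
The integrand has an elementary antiderivative on `[1, ∞)`. With `u = 1 / s` and `L = log s`
it is minus the primitive in `u` of `(9 / 8 * u ^ 2 + 3 / 2 * u * L - u - 1 / 4) ^ 2`, obtained from
`∫ u ^ n L = u ^ (n + 1) (L / (n + 1) + 1 / (n + 1) ^ 2)` and the analogous formula for `L ^ 2`.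
It equals `-11 / 1920` at `s = 1`. It is a polynomial without constant term in `u` and `L * u`,
both of which tend to `0`, so it vanishes at infinity. As the integrand is nonnegative, the
fundamental theorem of calculus on `(1, ∞)` applies, with integrability for free.
-/

/-- The antiderivative, written as a polynomial in `s⁻¹` and `log s * s⁻¹` so that its limit at
infinity is read off by continuity. -/
noncomputable def psi3Primitive (s : ℝ) : ℝ :=
  -(81 / 320 * s⁻¹ ^ 5 + 27 / 32 * s⁻¹ ^ 3 * (Real.log s * s⁻¹) - 45 / 128 * s⁻¹ ^ 4
    + 3 / 4 * s⁻¹ * (Real.log s * s⁻¹) ^ 2 - 1 / 2 * s⁻¹ ^ 2 * (Real.log s * s⁻¹)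
    - 1 / 48 * s⁻¹ ^ 3 - 3 / 8 * s⁻¹ * (Real.log s * s⁻¹) + 1 / 16 * s⁻¹ ^ 2 + 1 / 16 * s⁻¹)

lemma hasDerivAt_psi3Primitive {s : ℝ} (hs : 0 < s) :
    HasDerivAt psi3Primitive
      ((9 / (8 * s ^ 2) + 3 * Real.log s / (2 * s) - 1 / s - 1 / 4) ^ 2 / s ^ 2) s := by
  have hu := hasDerivAt_inv hs.ne'
  have hv := (Real.hasDerivAt_log hs.ne').mul hu
  have h := (((((((((hu.pow 5).const_mul (81 / 320)).add
    (((hu.pow 3).const_mul (27 / 32)).mul hv)).sub ((hu.pow 4).const_mul (45 / 128))).add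
    ((hu.const_mul (3 / 4)).mul (hv.pow 2))).sub
    (((hu.pow 2).const_mul (1 / 2)).mul hv)).sub ((hu.pow 3).const_mul (1 / 48))).sub
    ((hu.const_mul (3 / 8)).mul hv)).add ((hu.pow 2).const_mul (1 / 16))).add
    (hu.const_mul (1 / 16)) |>.neg
  refine (h.congr_deriv ?_).congr_of_eventuallyEq (Filter.Eventually.of_forall fun x => ?_)
  · norm_num only [Pi.mul_apply, Pi.pow_apply, Nat.cast_ofNat, pow_one]
    have := hs.ne'
    field_simp
    ring
  · simp [psi3Primitive]

lemma tendsto_psi3Primitive :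
    Filter.Tendsto psi3Primitive Filter.atTop (nhds 0) := by
  have hu : Filter.Tendsto (fun s : ℝ => s⁻¹) Filter.atTop (nhds 0) := tendsto_inv_atTop_zero
  have hv : Filter.Tendsto (fun s : ℝ => Real.log s * s⁻¹) Filter.atTop (nhds 0) := by
    simpa [div_eq_mul_inv] using Real.isLittleO_log_id_atTop.tendsto_div_nhds_zero
  have hc : Continuous fun p : ℝ × ℝ =>
      -(81 / 320 * p.1 ^ 5 + 27 / 32 * p.1 ^ 3 * p.2 - 45 / 128 * p.1 ^ 4
        + 3 / 4 * p.1 * p.2 ^ 2 - 1 / 2 * p.1 ^ 2 * p.2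
        - 1 / 48 * p.1 ^ 3 - 3 / 8 * p.1 * p.2 + 1 / 16 * p.1 ^ 2 + 1 / 16 * p.1) := by
    fun_prop
  exact ((hc.tendsto' (0, 0) 0 (by simp)).comp (hu.prodMk_nhds hv)).congr fun s => by
    simp only [Function.comp_apply, psi3Primitive]

/-- The variance `Δ₃²` of the projection `ψ₃` of the kernel of the statistic `I_n^(3)` under the
standard Pareto null hypothesis equals `11/1920`. -/
theorem psi3_variance :
    (∫ s in Ioi (1 : ℝ),
      (9 / (8 * s ^ 2) + 3 * Real.log s / (2 * s) - 1 / s - 1 / 4) ^ 2 / s ^ 2)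
      = 11 / 1920 := by
  rw [integral_Ioi_of_hasDerivAt_of_nonneg'
    (fun s hs => hasDerivAt_psi3Primitive (zero_lt_one.trans_le hs))
    (fun s _ => by positivity) tendsto_psi3Primitive]
  norm_num [psi3Primitive]
end

section
/- Let ψ₄(s) = 12 ln s/(5s) − 4/(5s³) + 18/(5s²) − 13/(5s) − 3/10 for s ≥ 1. Then ∫₁^∞ ψ₄(s)² s^{−2} ds = 271/52500. -/
/-!
The substitution `u = 1/s`, `v = log s / s` turns the integrand into a polynomial in `u`, `v` times
`u ^ 2`. Since `du/ds = -u ^ 2` and `dv/ds = u ^ 2 - u * v`, it has an explicit antiderivative that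
is a polynomial `P(u, v)` without constant term (comparing coefficients of `u ^ k * (log s) ^ j`
gives a triangular linear system for those of `P`). As `s → ∞` both `u` and `v` tend to `0`, so the
integral is `P(0, 0) - P(1, 0) = 271/52500`. The integrand is nonnegative, so convergence of the
antiderivative at infinity already yields integrability.
-/

open MeasureTheory Set

/-- The antiderivative of the integrand, as a polynomial in `u = 1/s` and `v = log s / s`. -/
noncomputable def antiderivPoly (u v : ℝ) : ℝ :=
  -(9 / 100) * u + 18 / 25 * (v * u) - 21 / 50 * u ^ 2 - 48 / 25 * (v ^ 2 * u)
    + 72 / 25 * (v * u ^ 2) - 43 / 75 * u ^ 3 - 108 / 25 * (v * u ^ 3) + 87 / 25 * u ^ 4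
    + 96 / 125 * (v * u ^ 4) - 2044 / 625 * u ^ 5 + 24 / 25 * u ^ 6 - 16 / 175 * u ^ 7

lemma hasDerivAt_antiderivPoly {s : ℝ} (hs : 0 < s) :
    HasDerivAt (fun s : ℝ => antiderivPoly s⁻¹ (Real.log s * s⁻¹))
      ((12 * Real.log s / (5 * s) - 4 / (5 * s ^ 3) + 18 / (5 * s ^ 2) - 13 / (5 * s) - 3 / 10) ^ 2
        / s ^ 2) s := by
  have hu : HasDerivAt (fun s : ℝ => s⁻¹) (-(s ^ 2)⁻¹) s := hasDerivAt_inv hs.ne'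
  have hv := (Real.hasDerivAt_log hs.ne').fun_mul hu
  have h := ((((((((((((hu.const_mul (-(9 / 100) : ℝ)).fun_add
    ((hv.fun_mul hu).const_mul (18 / 25))).fun_sub
    ((hu.fun_pow 2).const_mul (21 / 50))).fun_sub
    (((hv.fun_pow 2).fun_mul hu).const_mul (48 / 25))).fun_add
    ((hv.fun_mul (hu.fun_pow 2)).const_mul (72 / 25))).fun_sub
    ((hu.fun_pow 3).const_mul (43 / 75))).fun_sub
    ((hv.fun_mul (hu.fun_pow 3)).const_mul (108 / 25))).fun_add
    ((hu.fun_pow 4).const_mul (87 / 25))).fun_add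
    ((hv.fun_mul (hu.fun_pow 4)).const_mul (96 / 125))).fun_sub
    ((hu.fun_pow 5).const_mul (2044 / 625))).fun_add
    ((hu.fun_pow 6).const_mul (24 / 25))).fun_sub
    ((hu.fun_pow 7).const_mul (16 / 175)))
  unfold antiderivPoly
  refine h.congr_deriv ?_
  have hs' := hs.ne'
  norm_num
  field_simp
  ring

/-- The variance `Δ₄²` of the projection `ψ₄` of the kernel of the statistic `I_n^(4)` under the
standard Pareto null hypothesis equals `271/52500`. -/
theorem psi4_variance :
    (∫ s in Ioi (1 : ℝ),
      (12 * Real.log s / (5 * s) - 4 / (5 * s ^ 3) + 18 / (5 * s ^ 2) - 13 / (5 * s) - 3 / 10) ^ 2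
        / s ^ 2) = 271 / 52500 := by
  have hu : Filter.Tendsto (fun s : ℝ => s⁻¹) Filter.atTop (nhds 0) := tendsto_inv_atTop_zero
  have hv : Filter.Tendsto (fun s : ℝ => Real.log s * s⁻¹) Filter.atTop (nhds 0) := by
    simpa [div_eq_mul_inv] using Real.tendsto_pow_log_div_mul_add_atTop 1 0 1 one_ne_zero
  have hP : Continuous (fun p : ℝ × ℝ => antiderivPoly p.1 p.2) := by
    unfold antiderivPoly
    fun_prop
  have hlim := (hP.tendsto (0, 0)).comp (hu.prodMk_nhds hv)
  rw [integral_Ioi_of_hasDerivAt_of_nonneg'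
    (fun s hs => hasDerivAt_antiderivPoly (zero_lt_one.trans_le hs))
    (fun s _ => by positivity) hlim]
  norm_num [antiderivPoly]
end

section
/- Let ψ₄(s) = 12 ln s/(5s) − 4/(5s³) + 18/(5s²) − 13/(5s) − 3/10 and h₁(s) = (s − 2)/s³ for s ≥ 1. Then ∫₁^∞ ψ₄(s) h₁(s) ds = 1/50. -/
open MeasureTheory Set

/-!
The integrand is a combination of the functions `s⁻ᵏ` and `log s * s⁻ᵏ` with `k ≥ 2`, so it has an
elementary antiderivative (`psi4Antideriv`, obtained with
`∫ log s * s⁻ᵏ = -log s * s^(1-k) / (k-1) - s^(1-k) / (k-1)²`). It vanishes at infinity because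
`log s / s → 0`, and takes the value `-1/50` at `1`. The integrand is dominated by `12 s⁻²` on
`(1, ∞)`, hence integrable, and the fundamental theorem of calculus on a half-line applies.
-/

/-- An antiderivative of `ψ₄ h₁` on `(0, ∞)`, written as a polynomial in `s⁻¹` and `log s`. -/
noncomputable def psi4Antideriv (s : ℝ) : ℝ :=
  Real.log s * (-(6 / 5) * s⁻¹ ^ 2 + 8 / 5 * s⁻¹ ^ 3)
    + (3 / 10 * s⁻¹ + 2 / 5 * s⁻¹ ^ 2 - 12 / 5 * s⁻¹ ^ 3 + 2 * s⁻¹ ^ 4 - 8 / 25 * s⁻¹ ^ 5)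

theorem hasDerivAt_psi4Antideriv {s : ℝ} (hs : 0 < s) :
    HasDerivAt psi4Antideriv
      ((12 * Real.log s / (5 * s) - 4 / (5 * s ^ 3) + 18 / (5 * s ^ 2) - 13 / (5 * s) - 3 / 10)
        * ((s - 2) / s ^ 3)) s := by
  have h0 : s ≠ 0 := hs.ne'
  have hi := hasDerivAt_inv h0
  have h := ((Real.hasDerivAt_log h0).mul
    (((hi.pow 2).const_mul (-(6 / 5))).add ((hi.pow 3).const_mul (8 / 5)))).add
    (((((hi.const_mul (3 / 10)).add ((hi.pow 2).const_mul (2 / 5))).sub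
      ((hi.pow 3).const_mul (12 / 5))).add ((hi.pow 4).const_mul 2)).sub
      ((hi.pow 5).const_mul (8 / 25)))
  refine h.congr_deriv ?_
  simp only [Pi.add_apply, Pi.pow_apply]
  push_cast
  field_simp
  ring

theorem tendsto_psi4Antideriv : Filter.Tendsto psi4Antideriv Filter.atTop (nhds 0) := by
  have hu : Filter.Tendsto (fun s : ℝ => s⁻¹) Filter.atTop (nhds 0) := tendsto_inv_atTop_zero
  have hl : Filter.Tendsto (fun s : ℝ => Real.log s / s) Filter.atTop (nhds 0) :=
    Real.isLittleO_log_id_atTop.tendsto_div_nhds_zero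
  have h := (hl.mul ((hu.const_mul (-(6 / 5))).add ((hu.pow 2).const_mul (8 / 5)))).add
    (((((hu.const_mul (3 / 10)).add ((hu.pow 2).const_mul (2 / 5))).sub
      ((hu.pow 3).const_mul (12 / 5))).add ((hu.pow 4).const_mul 2)).sub
      ((hu.pow 5).const_mul (8 / 25)))
  convert h using 1
  · funext s
    simp only [psi4Antideriv, div_eq_mul_inv]
    ring
  · norm_num

theorem integrableOn_psi4_h1 :
    IntegrableOn (fun s : ℝ =>
      (12 * Real.log s / (5 * s) - 4 / (5 * s ^ 3) + 18 / (5 * s ^ 2) - 13 / (5 * s) - 3 / 10)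
        * ((s - 2) / s ^ 3)) (Ioi 1) := by
  have hg : IntegrableOn (fun s : ℝ => 12 * s ^ (-2 : ℝ)) (Ioi 1) :=
    (integrableOn_Ioi_rpow_of_lt (by norm_num) one_pos).const_mul 12
  refine hg.mono' (Measurable.aestronglyMeasurable (by fun_prop)) ?_
  refine ae_restrict_of_forall_mem measurableSet_Ioi fun s hs => ?_
  have hs1 : (1 : ℝ) < s := hs
  have hs0 : 0 < s := by linarith
  have hu0 : 0 < s⁻¹ := inv_pos.2 hs0
  have hu1 : s⁻¹ ≤ 1 := inv_le_one_of_one_le₀ hs1.le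
  have hL0 : 0 ≤ Real.log s * s⁻¹ := mul_nonneg (Real.log_nonneg hs1.le) hu0.le
  have hL1 : Real.log s * s⁻¹ ≤ 1 := by
    rw [← div_eq_mul_inv, div_le_one hs0]
    linarith [Real.log_le_sub_one_of_pos hs0]
  have hu2 : s⁻¹ ^ 2 ≤ 1 := pow_le_one₀ hu0.le hu1
  have hu3 : s⁻¹ ^ 3 ≤ 1 := pow_le_one₀ hu0.le hu1
  have hu2' : 0 < s⁻¹ ^ 2 := by positivity
  have hu3' : 0 < s⁻¹ ^ 3 := by positivity
  have e1 : 12 * Real.log s / (5 * s) - 4 / (5 * s ^ 3) + 18 / (5 * s ^ 2) - 13 / (5 * s) - 3 / 10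
      = 12 / 5 * (Real.log s * s⁻¹) - 4 / 5 * s⁻¹ ^ 3 + 18 / 5 * s⁻¹ ^ 2 - 13 / 5 * s⁻¹
        - 3 / 10 := by
    field_simp
  have e2 : (s - 2) / s ^ 3 = (1 - 2 * s⁻¹) * s⁻¹ ^ 2 := by
    field_simp
  have e3 : s ^ (-2 : ℝ) = s⁻¹ ^ 2 := by
    rw [Real.rpow_neg hs0.le, inv_pow]
    norm_cast
  rw [Real.norm_eq_abs, abs_mul, e1, e2, e3, abs_mul, abs_of_pos hu2']
  have b1 : |12 / 5 * (Real.log s * s⁻¹) - 4 / 5 * s⁻¹ ^ 3 + 18 / 5 * s⁻¹ ^ 2 - 13 / 5 * s⁻¹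
      - 3 / 10| ≤ 12 := abs_le.2 ⟨by linarith, by linarith⟩
  have b2 : |1 - 2 * s⁻¹| ≤ 1 := abs_le.2 ⟨by linarith, by linarith⟩
  calc _ ≤ 12 * (1 * s⁻¹ ^ 2) := by gcongr
    _ = _ := by ring

/-- `∫₁^∞ ψ₄(s) h₁(s) ds = 1/50`, where `ψ₄` is the projection of the kernel of `I_n^(4)` and
`h₁(s) = (s-2)/s³` is the θ-derivative at `θ = 0` of the density of the first Ley–Paindaveine
alternative. -/
theorem psi4_h1_integral :
    (∫ s in Ioi (1 : ℝ),
      (12 * Real.log s / (5 * s) - 4 / (5 * s ^ 3) + 18 / (5 * s ^ 2) - 13 / (5 * s) - 3 / 10)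
        * ((s - 2) / s ^ 3)) = 1 / 50 := by
  rw [integral_Ioi_of_hasDerivAt_of_tendsto'
    (fun s hs => hasDerivAt_psi4Antideriv (one_pos.trans_le hs))
    integrableOn_psi4_h1 tendsto_psi4Antideriv]
  norm_num [psi4Antideriv]
end

section
/- Let h₁(x) = (x − 2)/x³ for x ≥ 1. Then ∫₁^∞ h₁(x)² x² dx − (∫₁^∞ h₁(x) ln x dx)² = 1/12; consequently the Kullback–Leibler distance from the first Ley–Paindaveine alternative to the Pareto family satisfies K₁(θ) ∼ θ²/24 as θ → 0. -/
/-! The first integrand expands to `x⁻² - 4 x⁻³ + 4 x⁻⁴`, whose integral over `(1, ∞)` is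
`1 - 2 + 4/3 = 1/3`. The second splits as `x⁻² log x - 2 x⁻³ log x`, and
`∫ x⁻² log x = 1`, `∫ x⁻³ log x = 1/4`, so it integrates to `1/2`; finally `1/3 - 1/4 = 1/12`.
Each of the three integrals is computed from an explicit antiderivative vanishing at infinity.
The sign change of `x - 2` is the reason for splitting the second one: a nonnegative derivative
gives its own integrability in the fundamental theorem of calculus on a half-line. -/

open MeasureTheory Set
open Filter Topology

/-- Fundamental theorem of calculus on `(1, ∞)` for a nonnegative function with an antiderivative
`g` vanishing at infinity, with integrability included in the conclusion. -/
lemma integral_Ioi_one_of_nonneg {g f : ℝ → ℝ}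
    (hd : ∀ x ∈ Ici (1 : ℝ), HasDerivAt g (f x) x) (hf : ∀ x ∈ Ioi (1 : ℝ), 0 ≤ f x)
    (hg : Tendsto g atTop (𝓝 0)) :
    IntegrableOn f (Ioi 1) ∧ ∫ x in Ioi (1 : ℝ), f x = -g 1 := by
  refine ⟨integrableOn_Ioi_deriv_of_nonneg' hd hf hg, ?_⟩
  rw [integral_Ioi_of_hasDerivAt_of_nonneg' hd hf hg, zero_sub]

lemma tendsto_log_div_id : Tendsto (fun x : ℝ => Real.log x / x) atTop (𝓝 0) :=
  Real.isLittleO_log_id_atTop.tendsto_div_nhds_zero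

lemma integral_sq_h1 : ∫ x in Ioi (1 : ℝ), ((x - 2) / x ^ 3) ^ 2 * x ^ 2 = 1 / 3 := by
  have hI : Tendsto (fun x : ℝ => x⁻¹) atTop (𝓝 0) := tendsto_inv_atTop_zero
  have h := (integral_Ioi_one_of_nonneg
    (g := fun x => -x⁻¹ + 2 * x⁻¹ ^ 2 - 4 / 3 * x⁻¹ ^ 3)
    (f := fun x => ((x - 2) / x ^ 3) ^ 2 * x ^ 2) ?_ ?_ ?_).2
  · rw [h]; norm_num
  · intro x hx
    have hx0 : x ≠ 0 := (zero_lt_one.trans_le hx).ne'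
    have hi := hasDerivAt_inv hx0
    refine ((hi.neg.add ((hi.pow 2).const_mul 2)).sub
      ((hi.pow 3).const_mul (4 / 3))).congr_deriv ?_
    norm_num only
    field_simp
    ring
  · intro x _
    positivity
  · simpa using (hI.neg.add ((hI.pow 2).const_mul 2)).sub ((hI.pow 3).const_mul (4 / 3))

lemma integral_log_div_sq :
    IntegrableOn (fun x : ℝ => Real.log x / x ^ 2) (Ioi 1) ∧
      ∫ x in Ioi (1 : ℝ), Real.log x / x ^ 2 = 1 := by
  have hI : Tendsto (fun x : ℝ => x⁻¹) atTop (𝓝 0) := tendsto_inv_atTop_zero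
  have h := integral_Ioi_one_of_nonneg
    (g := fun x => -(Real.log x / x) - x⁻¹) (f := fun x => Real.log x / x ^ 2) ?_ ?_ ?_
  · simpa using h
  · intro x hx
    have hx0 : x ≠ 0 := (zero_lt_one.trans_le hx).ne'
    refine ((((Real.hasDerivAt_log hx0).div (hasDerivAt_id' x) hx0).neg).sub
      (hasDerivAt_inv hx0)).congr_deriv ?_
    field_simp
    ring
  · intro x hx
    exact div_nonneg (Real.log_nonneg (le_of_lt hx)) (sq_nonneg x)
  · simpa using tendsto_log_div_id.neg.sub hI

lemma integral_log_div_cube :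
    IntegrableOn (fun x : ℝ => Real.log x / x ^ 3) (Ioi 1) ∧
      ∫ x in Ioi (1 : ℝ), Real.log x / x ^ 3 = 1 / 4 := by
  have hI : Tendsto (fun x : ℝ => x⁻¹) atTop (𝓝 0) := tendsto_inv_atTop_zero
  have h := integral_Ioi_one_of_nonneg
    (g := fun x => -(1 / 2 * (Real.log x / x * x⁻¹)) - 1 / 4 * x⁻¹ ^ 2)
    (f := fun x => Real.log x / x ^ 3) ?_ ?_ ?_
  · refine ⟨h.1, ?_⟩
    rw [h.2]; norm_num
  · intro x hx
    have hx0 : x ≠ 0 := (zero_lt_one.trans_le hx).ne'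
    have hi := hasDerivAt_inv hx0
    refine ((((((Real.hasDerivAt_log hx0).div (hasDerivAt_id' x) hx0).mul hi).const_mul
      (1 / 2)).neg).sub ((hi.pow 2).const_mul (1 / 4))).congr_deriv ?_
    simp only [Pi.div_apply]
    norm_num only
    field_simp
    ring
  · intro x hx
    have hx0 : 0 < x := zero_lt_one.trans hx
    exact div_nonneg (Real.log_nonneg (le_of_lt hx)) (by positivity)
  · simpa using ((tendsto_log_div_id.mul hI).const_mul (1 / 2 : ℝ)).neg.sub
      ((hI.pow 2).const_mul (1 / 4 : ℝ))

lemma integral_h1_log : ∫ x in Ioi (1 : ℝ), ((x - 2) / x ^ 3) * Real.log x = 1 / 2 := by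
  have hsplit : ∫ x in Ioi (1 : ℝ), ((x - 2) / x ^ 3) * Real.log x =
      ∫ x in Ioi (1 : ℝ), (Real.log x / x ^ 2 - 2 * (Real.log x / x ^ 3)) := by
    refine setIntegral_congr_fun measurableSet_Ioi fun x hx => ?_
    have hx0 : x ≠ 0 := (zero_lt_one.trans hx).ne'
    field_simp
  rw [hsplit, integral_sub integral_log_div_sq.1 (integral_log_div_cube.1.const_mul 2),
    integral_const_mul, integral_log_div_sq.2, integral_log_div_cube.2]
  norm_num

/-- For `h₁(x) = (x-2)/x³`, one has `∫₁^∞ h₁(x)² x² dx − (∫₁^∞ h₁(x) ln x dx)² = 1/12`;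
consequently the Kullback–Leibler distance from the first Ley–Paindaveine alternative to the
Pareto family satisfies `K₁(θ) ∼ θ²/24` as `θ → 0`. -/
theorem h1_KL_constant :
    (∫ x in Ioi (1 : ℝ), ((x - 2) / x ^ 3) ^ 2 * x ^ 2)
      - (∫ x in Ioi (1 : ℝ), ((x - 2) / x ^ 3) * Real.log x) ^ 2 = 1 / 12 := by
  rw [integral_sq_h1, integral_h1_log]
  norm_num
end

section
/- For every integer k ≥ 2 and every t ≥ 1, the projection ξ_k(s; t) = (1/t)((1 − 1/s)^{k−1} − 1/k) − 1{s ≥ t}((1 − t/s)^{k−1} − 1/k) is centered with respect to the standard Pareto distribution: ∫₁^∞ ξ_k(s; t) s^{−2} ds = 0. -/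
open MeasureTheory Set

/-!
For `t > 0` the substitution `u = 1 - t / s`, `du = t s⁻² ds`, maps `(t, ∞)` onto `(0, 1)`, so
`∫_t^∞ (1 - t/s)^n s⁻² ds = 1 / ((n + 1) t)` (`integral_pow_kernel`). Taking `n = k - 1` and
`n = 0`, the function `((1 - t/s)^(k-1) - 1/k) s⁻²` has integral `1/(k t) - (1/k)(1/t) = 0` over
`(t, ∞)` (`integral_centered_kernel`). Both terms of `ξ_k(·; t)` are of this form: the first with
parameter `1`, the second with parameter `t` once the indicator restricts the domain to `s > t`.
-/

/-- The antiderivative used is `(1 - t/s)^(n+1) / ((n + 1) t)`; integrability is free because the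
integrand is nonnegative and the antiderivative has a limit at infinity. -/
lemma integral_pow_kernel (n : ℕ) {t : ℝ} (ht : 0 < t) :
    IntegrableOn (fun s : ℝ => (1 - t / s) ^ n / s ^ 2) (Ioi t) ∧
      ∫ s in Ioi t, (1 - t / s) ^ n / s ^ 2 = 1 / ((n + 1) * t) := by
  have hderiv : ∀ s ∈ Ici t, HasDerivAt (fun s : ℝ => (1 - t / s) ^ (n + 1) / ((n + 1) * t))
      ((1 - t / s) ^ n / s ^ 2) s := by
    intro s hs
    have hs0 : s ≠ 0 := (ht.trans_le hs).ne'
    have h1 : HasDerivAt (fun s : ℝ => 1 - t / s) (t / s ^ 2) s := by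
      have := ((hasDerivAt_const s t).div (hasDerivAt_id s) hs0).const_sub 1
      refine this.congr_deriv ?_
      simp [neg_div]
    refine ((h1.pow (n + 1)).div_const ((n + 1) * t)).congr_deriv ?_
    have hn : (n : ℝ) + 1 ≠ 0 := by positivity
    rw [Nat.add_sub_cancel]
    push_cast
    field_simp
  have hpos : ∀ s ∈ Ioi t, 0 ≤ (1 - t / s) ^ n / s ^ 2 := by
    intro s hs
    have hs' : t / s ≤ 1 := (div_le_one (ht.trans hs)).2 (le_of_lt hs)
    have : 0 ≤ 1 - t / s := by linarith
    positivity
  have hlim : Filter.Tendsto (fun s : ℝ => (1 - t / s) ^ (n + 1) / ((n + 1) * t)) Filter.atTop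
      (nhds (1 / ((n + 1) * t))) := by
    have h0 : Filter.Tendsto (fun s : ℝ => t / s) Filter.atTop (nhds 0) :=
      Filter.Tendsto.const_div_atTop Filter.tendsto_id t
    simpa using ((h0.const_sub 1).pow (n + 1)).div_const ((n + 1) * t)
  refine ⟨integrableOn_Ioi_deriv_of_nonneg' hderiv hpos hlim, ?_⟩
  rw [integral_Ioi_of_hasDerivAt_of_nonneg' hderiv hpos hlim]
  simp [ht.ne']

lemma integral_centered_kernel {k : ℕ} (hk : 1 ≤ k) {t : ℝ} (ht : 0 < t) :
    IntegrableOn (fun s : ℝ => ((1 - t / s) ^ (k - 1) - 1 / (k : ℝ)) / s ^ 2) (Ioi t) ∧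
      ∫ s in Ioi t, ((1 - t / s) ^ (k - 1) - 1 / (k : ℝ)) / s ^ 2 = 0 := by
  obtain ⟨hi, hv⟩ := integral_pow_kernel (k - 1) ht
  obtain ⟨hi0, hv0⟩ := integral_pow_kernel 0 ht
  have hsplit : (fun s : ℝ => ((1 - t / s) ^ (k - 1) - 1 / (k : ℝ)) / s ^ 2) =
      fun s => (1 - t / s) ^ (k - 1) / s ^ 2 - 1 / (k : ℝ) * ((1 - t / s) ^ 0 / s ^ 2) := by
    funext s
    ring
  rw [hsplit]
  refine ⟨hi.sub (hi0.const_mul _), ?_⟩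
  rw [integral_sub hi (hi0.const_mul _), integral_const_mul, hv, hv0]
  push_cast [Nat.cast_sub hk]
  rw [sub_add_cancel, zero_add, one_mul, one_div_mul_one_div, sub_self]

/-- For every `k ≥ 2` and `t ≥ 1`, the projection
`ξ_k(s; t) = (1/t)((1 − 1/s)^{k−1} − 1/k) − 1{s ≥ t}((1 − t/s)^{k−1} − 1/k)` of the family of
kernels of the Kolmogorov-type statistic `D_n^(k)` is centered with respect to the standard
Pareto distribution: `∫₁^∞ ξ_k(s; t) s⁻² ds = 0`. -/
theorem xi_k_centered (k : ℕ) (hk : 2 ≤ k) (t : ℝ) (ht : 1 ≤ t) :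
    (∫ s in Ioi (1 : ℝ),
      ((1 / t) * ((1 - 1 / s) ^ (k - 1) - 1 / (k : ℝ))
        - (if t ≤ s then (1 - t / s) ^ (k - 1) - 1 / (k : ℝ) else 0)) / s ^ 2) = 0 := by
  have hk1 : 1 ≤ k := by omega
  obtain ⟨hi1, hv1⟩ := integral_centered_kernel hk1 one_pos
  obtain ⟨hit, hvt⟩ := integral_centered_kernel hk1 (one_pos.trans_le ht)
  set g : ℝ → ℝ := fun s => ((1 - t / s) ^ (k - 1) - 1 / (k : ℝ)) / s ^ 2 with hg
  have hind : Integrable ((Ioi t).indicator g) (volume.restrict (Ioi (1 : ℝ))) :=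
    (hit.integrable_indicator measurableSet_Ioi).restrict
  -- Away from the null set `{t}`, the conditions `t ≤ s` and `t < s` agree.
  have hae : ∀ᵐ s ∂(volume.restrict (Ioi (1 : ℝ))),
      ((1 / t) * ((1 - 1 / s) ^ (k - 1) - 1 / (k : ℝ))
        - (if t ≤ s then (1 - t / s) ^ (k - 1) - 1 / (k : ℝ) else 0)) / s ^ 2 =
      1 / t * (((1 - 1 / s) ^ (k - 1) - 1 / (k : ℝ)) / s ^ 2) - (Ioi t).indicator g s := by
    filter_upwards [ae_restrict_of_ae (Measure.ae_ne volume t)] with s hs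
    rcases lt_or_gt_of_ne hs with h | h
    · rw [if_neg (not_le.2 h), indicator_of_notMem (by simpa using h.le)]
      ring
    · rw [if_pos h.le, indicator_of_mem (by simpa using h), hg]
      ring
  rw [integral_congr_ae hae, integral_sub (hi1.const_mul _) hind, integral_const_mul, hv1,
    setIntegral_indicator measurableSet_Ioi, Ioi_inter_Ioi, sup_eq_right.2 ht, hvt]
  ring
end

section
/- Let ξ₃(s; t) = (1/t)(1/s² − 2/s + 2/3) − 1{s ≥ t}(t²/s² − 2t/s + 2/3) for s, t ≥ 1. Then for every t ≥ 1, ∫₁^∞ ξ₃(s; t)² s^{−2} ds = (4t³ + 4t² − 15t + 7)/(45t⁴). -/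
/-!
In the variable `u = 1 / s` the integrand is the square of a quadratic polynomial on each side of
the jump `s = t`, so each piece has a polynomial antiderivative in `1 / s` that vanishes at
infinity (`sqQuadPrimitive`, `integral_sqQuad`). Off the null set `{t}` the integrand equals the
quadratic without the indicator term on `(1, ∞)`, plus, on `(t, ∞)`, the difference of the squares
with and without that term; integrating these terms gives the rational function of `t`.
-/

open MeasureTheory Set

open Filter Topology

/-- The antiderivative, vanishing at `0`, of `u ↦ (A u² + B u + C)²`. -/
noncomputable def sqQuadPrimitive (A B C u : ℝ) : ℝ :=
  A ^ 2 * u ^ 5 / 5 + A * B * u ^ 4 / 2 + (2 * A * C + B ^ 2) * u ^ 3 / 3 + B * C * u ^ 2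
    + C ^ 2 * u

lemma hasDerivAt_sqQuadPrimitive (A B C u : ℝ) :
    HasDerivAt (sqQuadPrimitive A B C) ((A * u ^ 2 + B * u + C) ^ 2) u := by
  have h := (((((hasDerivAt_pow 5 u).const_mul (A ^ 2)).div_const 5).add
    (((hasDerivAt_pow 4 u).const_mul (A * B)).div_const 2)).add
    (((hasDerivAt_pow 3 u).const_mul (2 * A * C + B ^ 2)).div_const 3)).add
    ((hasDerivAt_pow 2 u).const_mul (B * C)) |>.add ((hasDerivAt_id u).const_mul (C ^ 2))
  refine h.congr_deriv ?_
  push_cast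
  ring

lemma hasDerivAt_neg_sqQuadPrimitive_inv (A B C : ℝ) {s : ℝ} (hs : s ≠ 0) :
    HasDerivAt (fun s => -sqQuadPrimitive A B C s⁻¹)
      ((A / s ^ 2 + B / s + C) ^ 2 / s ^ 2) s := by
  have h := ((hasDerivAt_sqQuadPrimitive A B C s⁻¹).comp s (hasDerivAt_inv hs)).neg
  refine h.congr_deriv ?_
  field_simp

lemma tendsto_neg_sqQuadPrimitive_inv (A B C : ℝ) :
    Tendsto (fun s => -sqQuadPrimitive A B C s⁻¹) atTop (𝓝 0) := by
  have h := ((hasDerivAt_sqQuadPrimitive A B C 0).continuousAt.tendsto.comp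
    (tendsto_inv_atTop_zero (𝕜 := ℝ))).neg
  simpa [sqQuadPrimitive, Function.comp_def] using h

lemma integrableOn_sqQuad (A B C : ℝ) {a : ℝ} (ha : 0 < a) :
    IntegrableOn (fun s : ℝ => (A / s ^ 2 + B / s + C) ^ 2 / s ^ 2) (Ioi a) :=
  integrableOn_Ioi_deriv_of_nonneg'
    (fun _ hs => hasDerivAt_neg_sqQuadPrimitive_inv A B C (ha.trans_le hs).ne')
    (fun _ _ => by positivity) (tendsto_neg_sqQuadPrimitive_inv A B C)

lemma integral_sqQuad (A B C : ℝ) {a : ℝ} (ha : 0 < a) :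
    ∫ s in Ioi a, (A / s ^ 2 + B / s + C) ^ 2 / s ^ 2 = sqQuadPrimitive A B C a⁻¹ := by
  rw [integral_Ioi_of_hasDerivAt_of_nonneg'
    (fun _ hs => hasDerivAt_neg_sqQuadPrimitive_inv A B C (ha.trans_le hs).ne')
    (fun _ _ => by positivity) (tendsto_neg_sqQuadPrimitive_inv A B C)]
  ring

/-- The variance `δ₃²(t)` of the projection `ξ₃(·; t)` of the kernel family of the
Kolmogorov-type statistic `D_n^(3)` under the standard Pareto null hypothesis equals
`(4t³ + 4t² − 15t + 7)/(45t⁴)` for every `t ≥ 1`. -/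
theorem xi3_variance (t : ℝ) (ht : 1 ≤ t) :
    (∫ s in Ioi (1 : ℝ),
      ((1 / t) * (1 / s ^ 2 - 2 / s + 2 / 3)
        - (if t ≤ s then t ^ 2 / s ^ 2 - 2 * t / s + 2 / 3 else 0)) ^ 2 / s ^ 2)
      = (4 * t ^ 3 + 4 * t ^ 2 - 15 * t + 7) / (45 * t ^ 4) := by
  have ht0 : 0 < t := by linarith
  -- `g` and `h` are the integrands to the left and to the right of the jump at `t`.
  let g : ℝ → ℝ := fun s => ((1 / t) / s ^ 2 + (-2 / t) / s + 2 / (3 * t)) ^ 2 / s ^ 2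
  let h : ℝ → ℝ := fun s =>
    ((1 / t - t ^ 2) / s ^ 2 + (-2 / t + 2 * t) / s + (2 / (3 * t) - 2 / 3)) ^ 2 / s ^ 2
  have hg1 : IntegrableOn g (Ioi 1) := integrableOn_sqQuad _ _ _ one_pos
  have hgt : IntegrableOn g (Ioi t) := integrableOn_sqQuad _ _ _ ht0
  have hht : IntegrableOn h (Ioi t) := integrableOn_sqQuad _ _ _ ht0
  have key : ∀ᵐ s ∂(volume.restrict (Ioi (1 : ℝ))),
      ((1 / t) * (1 / s ^ 2 - 2 / s + 2 / 3)
        - (if t ≤ s then t ^ 2 / s ^ 2 - 2 * t / s + 2 / 3 else 0)) ^ 2 / s ^ 2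
      = g s + (Ioi t).indicator (fun s => h s - g s) s := by
    filter_upwards [ae_restrict_of_ae (Measure.ae_ne volume t)] with s hst
    rcases lt_or_gt_of_ne hst with hlt | hgt
    · rw [if_neg hlt.not_ge, indicator_of_notMem (by simpa using hlt.le)]
      simp only [g]
      ring
    · rw [if_pos hgt.le, indicator_of_mem (by simpa using hgt)]
      simp only [g, h]
      ring
  have hind : IntegrableOn ((Ioi t).indicator (fun s => h s - g s)) (Ioi 1) :=
    ((integrable_indicator_iff measurableSet_Ioi).2 (hht.sub hgt)).integrableOn
  rw [integral_congr_ae key, integral_add hg1 hind, setIntegral_indicator measurableSet_Ioi,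
    inter_eq_self_of_subset_right (Ioi_subset_Ioi ht), integral_sub hht hgt]
  simp only [g, h]
  rw [integral_sqQuad _ _ _ one_pos, integral_sqQuad _ _ _ ht0, integral_sqQuad _ _ _ ht0]
  simp only [sqQuadPrimitive]
  field_simp
  ring
end

section
/- Let ξ₄(s; t) = (1/t)((1 − 1/s)³ − 1/4) − 1{s ≥ t}(−(t/s)³ + 3(t/s)² − 3t/s + 3/4) for s, t ≥ 1. Then for every t ≥ 1, ∫₁^∞ ξ₄(s; t)² s^{−2} ds = (45t⁴ + 45t³ − 252t² + 224t − 62)/(560t⁵). -/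
/-!
Substituting `u = 1 / s` turns `s ^ (-2) ds` on `(1, ∞)` into Lebesgue measure on `(0, 1)`. With
`g u = (1 - u) ^ 3 - 1 / 4`, the projection becomes `g u / t - 1{u ≤ 1 / t} g (t u)`, since
`-(t u) ^ 3 + 3 (t u) ^ 2 - 3 t u + 3 / 4 = g (t u)`. So the integral is that of the polynomial
`(g u / t) ^ 2` over `(1 / t, 1)` plus that of `(g u / t - g (t u)) ^ 2` over `(0, 1 / t)`, and both
are evaluated from explicit antiderivatives. The substitution is `integral_Ioi_comp_inv`, which also
supplies integrability, because the integrands are nonnegative.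
-/

open MeasureTheory Set
open Filter Topology

/-- The substitution `u = 1 / s` for a nonnegative function `f` with antiderivative `Q`. -/
lemma integral_Ioi_comp_inv {f Q : ℝ → ℝ} (hQ : ∀ u, HasDerivAt Q (f u) u) (hf : ∀ u, 0 ≤ f u)
    {a : ℝ} (ha : 0 < a) :
    IntegrableOn (fun s => f (1 / s) / s ^ 2) (Ioi a) ∧
      ∫ s in Ioi a, f (1 / s) / s ^ 2 = Q (1 / a) - Q 0 := by
  have hd : ∀ s ∈ Ici a, HasDerivAt (fun s => -Q (1 / s)) (f (1 / s) / s ^ 2) s := by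
    intro s hs
    have hs0 : s ≠ 0 := (ha.trans_le hs).ne'
    have h := ((hQ (s⁻¹)).comp s (hasDerivAt_inv hs0)).neg
    simp only [one_div]
    refine h.congr_deriv ?_
    ring
  have hpos : ∀ s ∈ Ioi a, 0 ≤ f (1 / s) / s ^ 2 := fun s _ =>
    div_nonneg (hf _) (sq_nonneg s)
  have hlim : Tendsto (fun s : ℝ => -Q (1 / s)) atTop (𝓝 (-Q 0)) := by
    have h := ((hQ 0).continuousAt.tendsto.comp (tendsto_inv_atTop_zero (𝕜 := ℝ))).neg
    simpa [Function.comp_def] using h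
  refine ⟨integrableOn_Ioi_deriv_of_nonneg' hd hpos hlim, ?_⟩
  rw [integral_Ioi_of_hasDerivAt_of_nonneg' hd hpos hlim]
  ring

/-- An antiderivative of `((1 - u) ^ 3 - 1 / 4) ^ 2`. -/
noncomputable def sqPrim (u : ℝ) : ℝ := -(1 - u) ^ 7 / 7 + (1 - u) ^ 4 / 8 + u / 16

/-- An antiderivative of the cross term `((1 - u) ^ 3 - 1 / 4) * ((1 - t * u) ^ 3 - 1 / 4)`, for
`t ≠ 0`; the product of the two cubes is expanded in powers of `u`. -/
noncomputable def crossPrim (t u : ℝ) : ℝ :=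
  u - 3 * (1 + t) * u ^ 2 / 2 + (3 + 9 * t + 3 * t ^ 2) * u ^ 3 / 3
    - (1 + 9 * t + 9 * t ^ 2 + t ^ 3) * u ^ 4 / 4 + (3 * t + 9 * t ^ 2 + 3 * t ^ 3) * u ^ 5 / 5
    - (3 * t ^ 2 + 3 * t ^ 3) * u ^ 6 / 6 + t ^ 3 * u ^ 7 / 7
    + (1 - u) ^ 4 / 16 + (1 - t * u) ^ 4 / (16 * t) + u / 16

lemma hasDerivAt_sqPrim (u : ℝ) : HasDerivAt sqPrim (((1 - u) ^ 3 - 1 / 4) ^ 2) u := by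
  have h1 := (hasDerivAt_id' u).const_sub 1
  have h := (((h1.fun_pow 7).fun_neg.div_const 7).fun_add ((h1.fun_pow 4).div_const 8)).fun_add
    ((hasDerivAt_id' u).div_const 16)
  refine h.congr_deriv ?_
  norm_num
  ring

lemma hasDerivAt_crossPrim {t : ℝ} (ht : t ≠ 0) (u : ℝ) :
    HasDerivAt (crossPrim t) (((1 - u) ^ 3 - 1 / 4) * ((1 - t * u) ^ 3 - 1 / 4)) u := by
  have h0 := hasDerivAt_id' u
  have h1 := h0.const_sub 1
  have h2 := (h0.const_mul t).const_sub 1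
  have hm (c d : ℝ) (n : ℕ) := ((h0.fun_pow n).const_mul c).div_const d
  have h := ((((((((h0.fun_sub (hm (3 * (1 + t)) 2 2)).fun_add
    (hm (3 + 9 * t + 3 * t ^ 2) 3 3)).fun_sub
    (hm (1 + 9 * t + 9 * t ^ 2 + t ^ 3) 4 4)).fun_add
    (hm (3 * t + 9 * t ^ 2 + 3 * t ^ 3) 5 5)).fun_sub
    (hm (3 * t ^ 2 + 3 * t ^ 3) 6 6)).fun_add (hm (t ^ 3) 7 7)).fun_add
    ((h1.fun_pow 4).div_const 16)).fun_add ((h2.fun_pow 4).div_const (16 * t))).fun_add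
    (h0.div_const 16)
  refine h.congr_deriv ?_
  norm_num
  field_simp
  ring

/-- The variance `δ₄²(t)` of the projection `ξ₄(·; t)` of the kernel family of the
Kolmogorov-type statistic `D_n^(4)` under the standard Pareto null hypothesis equals
`(45t⁴ + 45t³ − 252t² + 224t − 62)/(560t⁵)` for every `t ≥ 1`. -/
theorem xi4_variance (t : ℝ) (ht : 1 ≤ t) :
    (∫ s in Ioi (1 : ℝ),
      ((1 / t) * ((1 - 1 / s) ^ 3 - 1 / 4)
        - (if t ≤ s then -(t / s) ^ 3 + 3 * (t / s) ^ 2 - 3 * t / s + 3 / 4 else 0)) ^ 2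
        / s ^ 2)
      = (45 * t ^ 4 + 45 * t ^ 3 - 252 * t ^ 2 + 224 * t - 62) / (560 * t ^ 5) := by
  have t0 : 0 < t := one_pos.trans_le ht
  have t0' : t ≠ 0 := t0.ne'
  let fA : ℝ → ℝ := fun u => (1 / t * ((1 - u) ^ 3 - 1 / 4)) ^ 2
  let fB : ℝ → ℝ := fun u => (1 / t * ((1 - u) ^ 3 - 1 / 4) - ((1 - t * u) ^ 3 - 1 / 4)) ^ 2
  let QA : ℝ → ℝ := fun u => (1 / t) ^ 2 * sqPrim u
  let QB : ℝ → ℝ := fun u =>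
    (1 / t) ^ 2 * sqPrim u + 1 / t * sqPrim (t * u) - 2 / t * crossPrim t u
  have hA : ∀ u, HasDerivAt QA (fA u) u := fun u =>
    ((hasDerivAt_sqPrim u).const_mul ((1 / t) ^ 2)).congr_deriv (by simp only [fA]; ring)
  have hB : ∀ u, HasDerivAt QB (fB u) u := by
    intro u
    have h1 := (hasDerivAt_sqPrim u).const_mul ((1 / t) ^ 2)
    have h2 := ((hasDerivAt_sqPrim (t * u)).comp u
      ((hasDerivAt_id' u).const_mul t)).const_mul (1 / t)
    have h3 := (hasDerivAt_crossPrim t0' u).const_mul (2 / t)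
    refine ((h1.fun_add h2).fun_sub h3).congr_deriv ?_
    simp only [fB]
    field_simp
    ring
  obtain ⟨iA1, eA1⟩ := integral_Ioi_comp_inv hA (fun u => sq_nonneg _) one_pos
  obtain ⟨iAt, eAt⟩ := integral_Ioi_comp_inv hA (fun u => sq_nonneg _) t0
  obtain ⟨iBt, eBt⟩ := integral_Ioi_comp_inv hB (fun u => sq_nonneg _) t0
  set F : ℝ → ℝ := fun s => ((1 / t) * ((1 - 1 / s) ^ 3 - 1 / 4)
        - (if t ≤ s then -(t / s) ^ 3 + 3 * (t / s) ^ 2 - 3 * t / s + 3 / 4 else 0)) ^ 2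
        / s ^ 2 with hF
  have hFA : EqOn F (fun s => fA (1 / s) / s ^ 2) (Ioo 1 t) := by
    intro s hs
    simp only [hF, fA, if_neg (not_le.2 hs.2), sub_zero]
  have hFB : EqOn F (fun s => fB (1 / s) / s ^ 2) (Ioi t) := by
    intro s hs
    simp only [hF, fB, if_pos (le_of_lt (mem_Ioi.1 hs))]
    ring
  have hu : Ioc 1 t ∪ Ioi t = Ioi 1 := Ioc_union_Ioi_eq_Ioi ht
  have hdisj : Disjoint (Ioc 1 t) (Ioi t) := Ioc_disjoint_Ioi le_rfl
  have iAc := iA1.mono_set (Ioc_subset_Ioi_self : Ioc 1 t ⊆ Ioi 1)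
  -- The indicator is already on at `s = t`, so formula `fA` holds only on `Ioo 1 t`.
  have iFc : IntegrableOn F (Ioc 1 t) := by
    rw [integrableOn_Ioc_iff_integrableOn_Ioo] at iAc ⊢
    exact iAc.congr_fun hFA.symm measurableSet_Ioo
  have iFt : IntegrableOn F (Ioi t) := iBt.congr_fun hFB.symm measurableSet_Ioi
  have eA := setIntegral_union hdisj measurableSet_Ioi iAc iAt
  have eF := setIntegral_union hdisj measurableSet_Ioi iFc iFt
  have eFc : ∫ s in Ioc 1 t, F s = ∫ s in Ioc 1 t, fA (1 / s) / s ^ 2 := by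
    rw [integral_Ioc_eq_integral_Ioo, integral_Ioc_eq_integral_Ioo]
    exact setIntegral_congr_fun measurableSet_Ioo hFA
  have eFt := setIntegral_congr_fun (μ := volume) measurableSet_Ioi hFB
  rw [hu] at eA eF
  have key : ∫ s in Ioi 1, F s = QA (1 / 1) - QA (1 / t) + (QB (1 / t) - QB 0) := by
    rw [eF, eFc, eFt, eBt]
    linarith
  rw [key]
  simp only [QA, QB, sqPrim, crossPrim]
  field_simp
  ring
end

section
/- Let ξ₃(s; t) = (1/t)(1/s² − 2/s + 2/3) − 1{s ≥ t}(t²/s² − 2t/s + 2/3) and h₁(s) = (s − 2)/s³ for s, t ≥ 1. Then for every t ≥ 1, ∫₁^∞ ξ₃(s; t) h₁(s) ds = (t − 1)/(6t²); consequently the limit in probability b₁(t, θ) of H_n(t) − F_n(t) under the first Ley–Paindaveine alternative satisfies b₁(t, θ) ∼ 3θ·(t − 1)/(6t²) = θ(t − 1)/(2t²) as θ → 0. -/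
/-!
The score `h₁` is integrated against both parts of `ξ₃` by one formula: the kernel
`a²/s² − 2a/s + 2/3` integrated against `h₁` over `(a, ∞)` gives `1/(6a²)`
(`kernel_mul_score_integral`). The first part of `ξ₃` is `1/t` times the kernel with `a = 1`, and the
second is the kernel with `a = t` restricted to `[t, ∞)`, so the integral is
`(1/t)(1/6) − 1/(6t²)`.
-/

open MeasureTheory Set

lemma integrableOn_Ioi_inv_pow {a : ℝ} (ha : 0 < a) {n : ℕ} (hn : 2 ≤ n) :
    IntegrableOn (fun s : ℝ => (s⁻¹) ^ n) (Ioi a) := by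
  have hn' : (2 : ℝ) ≤ n := by exact_mod_cast hn
  refine (integrableOn_Ioi_rpow_of_lt (a := -(n : ℝ)) (by linarith) ha).congr_fun ?_
    measurableSet_Ioi
  intro s hs
  have hs0 : 0 < s := ha.trans hs
  simp [Real.rpow_neg hs0.le]

lemma kernel_mul_score_integrable {a : ℝ} (ha : 0 < a) :
    IntegrableOn (fun s : ℝ => (a ^ 2 / s ^ 2 - 2 * a / s + 2 / 3) * ((s - 2) / s ^ 3))
      (Ioi a) := by
  have h2 := integrableOn_Ioi_inv_pow ha (le_refl 2)
  have h3 := integrableOn_Ioi_inv_pow ha (show 2 ≤ 3 by norm_num)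
  have h4 := integrableOn_Ioi_inv_pow ha (show 2 ≤ 4 by norm_num)
  have h5 := integrableOn_Ioi_inv_pow ha (show 2 ≤ 5 by norm_num)
  refine IntegrableOn.congr_fun ((((h5.const_mul (-2 * a ^ 2)).add
    (h4.const_mul (a ^ 2 + 4 * a))).add (h3.const_mul (-2 * a - 4 / 3))).add
    (h2.const_mul (2 / 3))) ?_ measurableSet_Ioi
  intro s hs
  have hs0 : s ≠ 0 := (ha.trans hs).ne'
  simp only [Pi.add_apply]
  field_simp
  ring

lemma kernel_mul_score_integral {a : ℝ} (ha : 0 < a) :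
    ∫ s in Ioi a, (a ^ 2 / s ^ 2 - 2 * a / s + 2 / 3) * ((s - 2) / s ^ 3)
      = 1 / (6 * a ^ 2) := by
  -- The antiderivative is a polynomial in `s⁻¹` without constant term, so it vanishes at infinity.
  let P : ℝ → ℝ := fun u => a ^ 2 / 2 * u ^ 4 - (a ^ 2 + 4 * a) / 3 * u ^ 3
    + (a + 2 / 3) * u ^ 2 - 2 / 3 * u
  have hlim : Filter.Tendsto (fun s : ℝ => P s⁻¹) Filter.atTop (nhds 0) := by
    have hP : Continuous P := by fun_prop
    have h := (hP.tendsto 0).comp (tendsto_inv_atTop_zero (𝕜 := ℝ))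
    simpa [P, Function.comp_def] using h
  have hderiv : ∀ s ∈ Ici a, HasDerivAt (fun s : ℝ => P s⁻¹)
      ((a ^ 2 / s ^ 2 - 2 * a / s + 2 / 3) * ((s - 2) / s ^ 3)) s := by
    intro s hs
    have hs0 : s ≠ 0 := (ha.trans_le hs).ne'
    have hi := hasDerivAt_inv hs0
    refine (((((hi.fun_pow 4).const_mul (a ^ 2 / 2)).sub
      ((hi.fun_pow 3).const_mul ((a ^ 2 + 4 * a) / 3))).add
      ((hi.fun_pow 2).const_mul (a + 2 / 3))).sub (hi.const_mul (2 / 3))).congr_deriv ?_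
    norm_num
    field_simp
    ring
  rw [integral_Ioi_of_hasDerivAt_of_tendsto' hderiv (kernel_mul_score_integrable ha) hlim]
  simp only [P]
  field_simp
  ring

/-- For every `t ≥ 1`, `∫₁^∞ ξ₃(s; t) h₁(s) ds = (t − 1)/(6t²)`, where `ξ₃(·; t)` is the
projection of the kernel family of `D_n^(3)` and `h₁(s) = (s − 2)/s³` is the θ-derivative at
`θ = 0` of the density of the first Ley–Paindaveine alternative; consequently
`b₁(t, θ) ∼ θ(t − 1)/(2t²)` as `θ → 0`. -/
theorem xi3_h1_integral (t : ℝ) (ht : 1 ≤ t) :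
    (∫ s in Ioi (1 : ℝ),
      ((1 / t) * (1 / s ^ 2 - 2 / s + 2 / 3)
        - (if t ≤ s then t ^ 2 / s ^ 2 - 2 * t / s + 2 / 3 else 0)) * ((s - 2) / s ^ 3))
      = (t - 1) / (6 * t ^ 2) := by
  have ht0 : 0 < t := one_pos.trans_le ht
  have hone := (kernel_mul_score_integrable one_pos).const_mul (1 / t)
  have hsub : (Ioi (1 : ℝ) ∩ Ici t : Set ℝ) =ᵐ[volume] Ioi t := by
    rcases ht.eq_or_lt with rfl | h
    · rw [inter_eq_left.mpr Ioi_subset_Ici_self]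
      exact Filter.EventuallyEq.rfl
    · rw [inter_eq_right.mpr (Ici_subset_Ioi.mpr h)]
      exact Ioi_ae_eq_Ici.symm
  have hind : IntegrableOn ((Ici t).indicator
      (fun s : ℝ => (t ^ 2 / s ^ 2 - 2 * t / s + 2 / 3) * ((s - 2) / s ^ 3))) (Ioi 1) := by
    rw [IntegrableOn, integrable_indicator_iff measurableSet_Ici, IntegrableOn,
      Measure.restrict_restrict measurableSet_Ici, inter_comm, Measure.restrict_congr_set hsub]
    exact kernel_mul_score_integrable ht0
  calc _ = ∫ s in Ioi (1 : ℝ),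
        (1 / t * ((1 ^ 2 / s ^ 2 - 2 * 1 / s + 2 / 3) * ((s - 2) / s ^ 3))
          - (Ici t).indicator
            (fun s : ℝ => (t ^ 2 / s ^ 2 - 2 * t / s + 2 / 3) * ((s - 2) / s ^ 3)) s) := by
        congr 1 with s
        by_cases h : t ≤ s
        · simp only [h, if_true, indicator_of_mem (mem_Ici.mpr h)]
          ring
        · simp only [h, if_false, indicator, mem_Ici]
          ring
    _ = 1 / t * (1 / (6 * 1 ^ 2)) - 1 / (6 * t ^ 2) := by
        rw [integral_sub hone hind, integral_const_mul, kernel_mul_score_integral one_pos,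
          setIntegral_indicator measurableSet_Ici, setIntegral_congr_set hsub,
          kernel_mul_score_integral ht0]
    _ = (t - 1) / (6 * t ^ 2) := by
        field_simp
end
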